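/- Assume |q_α| > max(1, ‖θ‖_T) and 1 > ζ > 1 − (1/(T+1)) F_α(|q_α| + ‖θ‖_T) e^{‖θ‖_T²}. Then the unconstrained optimal strategy ν* given by y*_t = θ_t and v*_t = 1/ω(t) satisfies the ES constraint at level ζ, and consequently ν* maximizes J(x,·) over all ν ∈ U satisfying the ES constraint at level ζ. -/

import Mathlib

open MeasureTheory Real Set Filter
open scoped RealInnerProductSpace ENNReal

noncomputable section

abbrev E (d : ℕ) := EuclideanSpace ℝ (Fin d)

/-- ω(t) = T − t + 1 -/
def om (T t : ℝ) : ℝ := T - t + 1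

/-- running L²-norm ‖y‖_t = (∫₀^t |y_s|² ds)^{1/2} -/
def nrm {d : ℕ} (y : ℝ → E d) (t : ℝ) : ℝ :=
  Real.sqrt (∫ s in Set.Ioc (0:ℝ) t, ‖y s‖ ^ 2)

/-- running inner product (y,θ)_t = ∫₀^t y_s'θ_s ds -/
def ipr {d : ℕ} (y θ : ℝ → E d) (t : ℝ) : ℝ :=
  ∫ s in Set.Ioc (0:ℝ) t, ⟪y s, θ s⟫

/-- membership in L²([0,T];ℝ^d) -/
def L2fun {d : ℕ} (T : ℝ) (y : ℝ → E d) : Prop :=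
  Measurable y ∧ IntegrableOn (fun t => ‖y t‖ ^ 2) (Set.Ioc 0 T)

def k1 {d : ℕ} (T : ℝ) (θ : ℝ → E d) : ℝ :=
  ∫ t in Set.Ioc (0:ℝ) T, om T t * ‖θ t‖ ^ 2

def k2 {d : ℕ} (T : ℝ) (θ : ℝ → E d) : ℝ :=
  ∫ t in Set.Ioc (0:ℝ) T, om T t ^ 2 * ‖θ t‖ ^ 2

/-- Mills ratio ϖ(z) = e^{z²/2}∫_z^∞ e^{-s²/2} ds -/
def mills (z : ℝ) : ℝ := Real.exp (z ^ 2 / 2) * ∫ s in Set.Ioi z, Real.exp (-s ^ 2 / 2)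

/-- ι_α(u) = 1/ϖ(u + |q_α|) − u -/
def iotaA (qa u : ℝ) : ℝ := 1 / mills (u + |qa|) - u

/-- F_α(z) = (∫_z^∞ e^{-s²/2} ds)/(∫_{|q_α|}^∞ e^{-s²/2} ds) -/
def Fal (qa z : ℝ) : ℝ :=
  (∫ s in Set.Ioi z, Real.exp (-s ^ 2 / 2)) / ∫ s in Set.Ioi |qa|, Real.exp (-s ^ 2 / 2)

/-- f_α(x) = ln F_α(|q_α| + x) -/
def fal (qa x : ℝ) : ℝ := Real.log (Fal qa (|qa| + x))

/-- G₁(u,λ) -/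
def G1fun {d : ℕ} (T : ℝ) (θ : ℝ → E d) (qa u lam : ℝ) : ℝ :=
  ∫ t in Set.Ioc (0:ℝ) T,
    (om T t + lam) ^ 2 * ‖θ t‖ ^ 2 / (lam * iotaA qa u + u * (om T t + lam)) ^ 2

open Classical in
/-- ρ₁(λ) = inf{u ≥ 0 : G₁(u,λ) ≤ 1}, with value +∞ if no such u exists -/
def rho1 {d : ℕ} (T : ℝ) (θ : ℝ → E d) (qa lam : ℝ) : ℝ≥0∞ :=
  if {u : ℝ | 0 ≤ u ∧ G1fun T θ qa u lam ≤ 1}.Nonempty then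
    ENNReal.ofReal (sInf {u : ℝ | 0 ≤ u ∧ G1fun T θ qa u lam ≤ 1})
  else ⊤

open Classical in
/-- ς_λ(t), with ς_λ ≡ 1 if ρ₁(λ) = +∞ -/
def sig {d : ℕ} (T : ℝ) (θ : ℝ → E d) (qa lam t : ℝ) : ℝ :=
  if rho1 T θ qa lam = ⊤ then 1
  else (rho1 T θ qa lam).toReal * (om T t + lam) /
    (lam * iotaA qa (rho1 T θ qa lam).toReal + (rho1 T θ qa lam).toReal * (om T t + lam))

def lamMax' {d : ℕ} (T : ℝ) (θ : ℝ → E d) (qa : ℝ) : ℝ :=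
  (k1 T θ + Real.sqrt (k2 T θ * (iotaA qa 0 ^ 2 - nrm θ T ^ 2) + k1 T θ ^ 2)) /
    (iotaA qa 0 ^ 2 - nrm θ T ^ 2)

/-- Φ₁(λ) = −∫₀^T ς_λ(t)|θ_t|² dt − ln F_α(|q_α| + ‖ς_λθ‖_T) -/
def Phi1 {d : ℕ} (T : ℝ) (θ : ℝ → E d) (qa lam : ℝ) : ℝ :=
  -(∫ t in Set.Ioc (0:ℝ) T, sig T θ qa lam t * ‖θ t‖ ^ 2)
    - Real.log (Fal qa (|qa| + nrm (fun t => sig T θ qa lam t • θ t) T))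

/-- cumulated consumption V_t = ∫₀^t v_s ds -/
def Vtot (v : ℝ → ℝ) (t : ℝ) : ℝ := ∫ s in Set.Ioc (0:ℝ) t, v s

/-- the set U of admissible deterministic strategies -/
def Admiss {d : ℕ} (T : ℝ) (y : ℝ → E d) (v : ℝ → ℝ) : Prop :=
  Measurable y ∧ IntegrableOn (fun t => ‖y t‖ ^ 2) (Set.Ioc 0 T) ∧
    Measurable v ∧ (∀ t ∈ Set.Icc (0:ℝ) T, 0 < v t) ∧
    IntegrableOn v (Set.Ioc 0 T) ∧
    IntegrableOn (fun t => max (-Real.log (v t)) 0) (Set.Ioc 0 T)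

/-- the cost J(x,ν) -/
def Jcost {d : ℕ} (T x : ℝ) (r : ℝ → ℝ) (θ y : ℝ → E d) (v : ℝ → ℝ) : ℝ :=
  (T + 1) * Real.log x
    + (∫ t in Set.Ioc (0:ℝ) T, om T t * (r t + ⟪y t, θ t⟫ - ‖y t‖ ^ 2 / 2))
    + (∫ t in Set.Ioc (0:ℝ) T, (Real.log (v t) - Vtot v t))
    - Vtot v T

/-- A(x) = (T+1)ln x + ∫₀^T ω(t)r_t dt − T ln T -/
def Aconst (T x : ℝ) (r : ℝ → ℝ) : ℝ :=
  (T + 1) * Real.log x + (∫ t in Set.Ioc (0:ℝ) T, om T t * r t) - T * Real.log T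

/-- v^κ_t = κ/(T − tκ) -/
def vk (T k t : ℝ) : ℝ := k / (T - t * k)

/-- the VaR constraint at level ζ -/
def VaROK {d : ℕ} (T : ℝ) (θ y : ℝ → E d) (v : ℝ → ℝ) (qa z : ℝ) : Prop :=
  ∀ t ∈ Set.Icc (0:ℝ) T,
    Real.log (1 - z) ≤ ipr y θ t - nrm y t ^ 2 / 2 - Vtot v t - |qa| * nrm y t

/-- the ES constraint at level ζ -/
def ESOK {d : ℕ} (T : ℝ) (θ y : ℝ → E d) (v : ℝ → ℝ) (qa z : ℝ) : Prop :=
  ∀ t ∈ Set.Icc (0:ℝ) T,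
    Real.log (1 - z) ≤ ipr y θ t - Vtot v t + fal qa (nrm y t)

lemma integrable_exp_neg_sq_div_two : Integrable (fun s : ℝ => Real.exp (-s ^ 2 / 2)) := by
  have h := integrable_exp_neg_mul_sq (b := 1 / 2) (by norm_num)
  refine h.congr (ae_of_all _ fun s => ?_)
  simp only
  congr 1
  ring

lemma gaussian_tail_pos (z : ℝ) : 0 < ∫ s in Set.Ioi z, Real.exp (-s ^ 2 / 2) := by
  rw [setIntegral_pos_iff_support_of_nonneg_ae
    (ae_of_all _ fun s => (Real.exp_pos _).le) integrable_exp_neg_sq_div_two.integrableOn]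
  have : Function.support (fun s : ℝ => Real.exp (-s ^ 2 / 2)) = Set.univ := by
    ext s
    simp [Real.exp_ne_zero]
  simp [this]

/-- Shifting the Gaussian tail by `h ≥ 0` contracts it at least by `exp (-(z h + h² / 2))`. -/
lemma gaussian_tail_add_le (z : ℝ) {h : ℝ} (hh : 0 ≤ h) :
    (∫ s in Set.Ioi (z + h), Real.exp (-s ^ 2 / 2)) ≤
      Real.exp (-(z * h + h ^ 2 / 2)) * ∫ s in Set.Ioi z, Real.exp (-s ^ 2 / 2) := by
  have hshift : (∫ s in Set.Ioi (z + h), Real.exp (-s ^ 2 / 2)) =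
      ∫ s in Set.Ioi z, Real.exp (-(s + h) ^ 2 / 2) := by
    rw [← integral_indicator measurableSet_Ioi, ← integral_indicator measurableSet_Ioi,
      ← integral_add_right_eq_self _ h]
    congr 1
    ext s
    simp [Set.indicator]
  rw [hshift, ← integral_const_mul]
  refine setIntegral_mono_on (integrable_exp_neg_sq_div_two.comp_add_right h).integrableOn
    (integrable_exp_neg_sq_div_two.const_mul _).integrableOn measurableSet_Ioi fun s hs => ?_
  rw [← Real.exp_add]
  refine Real.exp_le_exp.2 ?_
  nlinarith [mul_nonneg hh (sub_nonneg.2 (le_of_lt hs))]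

lemma Fal_pos (qa z : ℝ) : 0 < Fal qa z :=
  div_pos (gaussian_tail_pos _) (gaussian_tail_pos _)

/-- The map `u ↦ u² + f_α(u)` is decreasing on `[0, |q_α|]`. -/
lemma sq_add_fal_anti {qa u w : ℝ} (huw : u ≤ w) (hw : w ≤ |qa|) :
    w ^ 2 + fal qa w ≤ u ^ 2 + fal qa u := by
  have h0 := sub_nonneg.2 huw
  have h1 : Fal qa (|qa| + w) ≤ Real.exp (u ^ 2 - w ^ 2) * Fal qa (|qa| + u) := by
    unfold Fal
    rw [← mul_div_assoc]
    refine div_le_div_of_nonneg_right ?_ (gaussian_tail_pos _).le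
    have h2 := gaussian_tail_add_le (|qa| + u) h0
    rw [show |qa| + u + (w - u) = |qa| + w by ring] at h2
    refine h2.trans (mul_le_mul_of_nonneg_right (Real.exp_le_exp.2 ?_) (gaussian_tail_pos _).le)
    nlinarith [mul_nonneg h0 (sub_nonneg.2 hw), mul_nonneg h0 h0]
  have h3 := Real.log_le_log (Fal_pos _ _) h1
  rw [Real.log_mul (Real.exp_ne_zero _) (Fal_pos _ _).ne', Real.log_exp] at h3
  unfold fal
  linarith

lemma one_le_om {T t : ℝ} (h : t ≤ T) : 1 ≤ om T t := by
  unfold om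
  linarith

lemma continuous_om (T : ℝ) : Continuous (om T) := by
  unfold om
  fun_prop

lemma IntegrableOn.om_mul {T : ℝ} {f : ℝ → ℝ} (hf : IntegrableOn f (Set.Ioc 0 T)) :
    IntegrableOn (fun t => om T t * f t) (Set.Ioc 0 T) := by
  refine Integrable.bdd_mul (c := T + 1) hf (continuous_om T).aestronglyMeasurable ?_
  filter_upwards [ae_restrict_mem measurableSet_Ioc] with t ht
  rw [Real.norm_eq_abs, abs_of_nonneg (by linarith [one_le_om ht.2])]
  unfold om
  linarith [ht.1]

lemma integrableOn_of_continuousOn_Icc {T : ℝ} {f : ℝ → ℝ} (hf : ContinuousOn f (Set.Icc 0 T)) :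
    IntegrableOn f (Set.Ioc 0 T) :=
  hf.integrableOn_Icc.mono_set Set.Ioc_subset_Icc_self

lemma continuousOn_one_div_om (T : ℝ) : ContinuousOn (fun t => 1 / om T t) (Set.Icc 0 T) :=
  continuousOn_const.div (continuous_om T).continuousOn
    fun t ht => by linarith [one_le_om ht.2]

lemma admiss_one_div_om {d : ℕ} {T : ℝ} {θ : ℝ → E d} (hθm : Measurable θ)
    (hθ2 : IntegrableOn (fun t => ‖θ t‖ ^ 2) (Set.Ioc 0 T)) :
    Admiss T θ (fun t => 1 / om T t) := by
  have hpos : ∀ t ∈ Set.Icc (0:ℝ) T, 0 < 1 / om T t := fun t ht =>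
    one_div_pos.2 (by linarith [one_le_om ht.2])
  refine ⟨hθm, hθ2, measurable_const.div (continuous_om T).measurable, hpos,
    integrableOn_of_continuousOn_Icc (continuousOn_one_div_om T),
    integrableOn_of_continuousOn_Icc ?_⟩
  exact ContinuousOn.sup ((continuousOn_one_div_om T).log fun t ht => (hpos t ht).ne').neg
    continuousOn_const

lemma Vtot_one_div_om {T t : ℝ} (ht0 : 0 ≤ t) (htT : t ≤ T) :
    Vtot (fun t => 1 / om T t) t = Real.log (T + 1) - Real.log (om T t) := by
  unfold Vtot
  rw [← intervalIntegral.integral_of_le ht0]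
  have hd : ∀ s ∈ Set.uIcc 0 t, HasDerivAt (fun s => -Real.log (om T s)) (1 / om T s) s := by
    intro s hs
    rw [Set.uIcc_of_le ht0] at hs
    have hne : om T s ≠ 0 := by linarith [one_le_om (hs.2.trans htT)]
    have h1 : HasDerivAt (om T) (-1) s := by
      unfold om
      simpa using ((hasDerivAt_id s).const_sub T).add_const 1
    have h2 := (h1.log hne).neg
    rwa [neg_div, neg_neg] at h2
  rw [intervalIntegral.integral_eq_sub_of_hasDerivAt hd]
  · simp only [om, sub_zero]
    ring
  · refine ContinuousOn.intervalIntegrable ((continuousOn_one_div_om T).mono ?_)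
    rw [Set.uIcc_of_le ht0]
    exact Set.Icc_subset_Icc_right htT

lemma nrm_sq {d : ℕ} (y : ℝ → E d) (t : ℝ) :
    nrm y t ^ 2 = ∫ s in Set.Ioc (0:ℝ) t, ‖y s‖ ^ 2 :=
  Real.sq_sqrt (integral_nonneg fun _ => by positivity)

lemma nrm_mono {d : ℕ} {T t : ℝ} {y : ℝ → E d}
    (hy : IntegrableOn (fun t => ‖y t‖ ^ 2) (Set.Ioc 0 T)) (htT : t ≤ T) :
    nrm y t ≤ nrm y T :=
  Real.sqrt_le_sqrt (setIntegral_mono_set hy (ae_of_all _ fun _ => by positivity)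
    (Set.Ioc_subset_Ioc_right htT).eventuallyLE)

lemma ESOK_self {d : ℕ} {T : ℝ} (hT : 0 < T) {θ : ℝ → E d}
    (hθ2 : IntegrableOn (fun t => ‖θ t‖ ^ 2) (Set.Ioc 0 T)) {qa z : ℝ}
    (hqθ : nrm θ T ≤ |qa|) (hz1 : z < 1)
    (hz2 : 1 - (1 / (T + 1)) * Fal qa (|qa| + nrm θ T) * Real.exp (nrm θ T ^ 2) < z) :
    ESOK T θ θ (fun t => 1 / om T t) qa z := by
  intro t ht
  have hT1 : T + 1 ≠ 0 := by positivity
  have hF := Fal_pos qa (|qa| + nrm θ T)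
  have h1 : Real.log (1 - z) ≤
      Real.log ((1 / (T + 1)) * Fal qa (|qa| + nrm θ T) * Real.exp (nrm θ T ^ 2)) :=
    Real.log_le_log (by linarith) (by linarith)
  rw [Real.log_mul (by positivity) (Real.exp_ne_zero _), Real.log_exp,
    Real.log_mul (by positivity) hF.ne', one_div, Real.log_inv] at h1
  have h2 := sq_add_fal_anti (nrm_mono hθ2 ht.2) hqθ
  have h3 : ipr θ θ t = nrm θ t ^ 2 := by
    rw [nrm_sq]
    simp [ipr]
  have h4 : 0 ≤ Real.log (om T t) := Real.log_nonneg (one_le_om ht.2)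
  rw [Vtot_one_div_om ht.1 ht.2, h3]
  unfold fal at *
  linarith

lemma integrableOn_inner {d : ℕ} {s : Set ℝ} {y θ : ℝ → E d} (hy : Measurable y)
    (hθ : Measurable θ) (hy2 : IntegrableOn (fun t => ‖y t‖ ^ 2) s)
    (hθ2 : IntegrableOn (fun t => ‖θ t‖ ^ 2) s) :
    IntegrableOn (fun t => ⟪y t, θ t⟫) s := by
  refine Integrable.mono' (hy2.add hθ2) (hy.inner hθ).aestronglyMeasurable
    (ae_of_all _ fun t => ?_)
  have := norm_inner_le_norm (𝕜 := ℝ) (y t) (θ t)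
  simp only [Pi.add_apply]
  nlinarith [sq_nonneg (‖y t‖ - ‖θ t‖), sq_nonneg ‖y t‖, sq_nonneg ‖θ t‖]

lemma integrableOn_portfolio {d : ℕ} {T : ℝ} {r : ℝ → ℝ} {y θ : ℝ → E d}
    (hr : IntegrableOn r (Set.Ioc 0 T)) (hy : Measurable y) (hθ : Measurable θ)
    (hy2 : IntegrableOn (fun t => ‖y t‖ ^ 2) (Set.Ioc 0 T))
    (hθ2 : IntegrableOn (fun t => ‖θ t‖ ^ 2) (Set.Ioc 0 T)) :
    IntegrableOn (fun t => om T t * (r t + ⟪y t, θ t⟫ - ‖y t‖ ^ 2 / 2)) (Set.Ioc 0 T) :=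
  IntegrableOn.om_mul ((hr.add (integrableOn_inner hy hθ hy2 hθ2)).sub (hy2.div_const 2))

lemma portfolio_le {d : ℕ} {T : ℝ} {r : ℝ → ℝ} {y θ : ℝ → E d}
    (hr : IntegrableOn r (Set.Ioc 0 T)) (hy : Measurable y) (hθ : Measurable θ)
    (hy2 : IntegrableOn (fun t => ‖y t‖ ^ 2) (Set.Ioc 0 T))
    (hθ2 : IntegrableOn (fun t => ‖θ t‖ ^ 2) (Set.Ioc 0 T)) :
    (∫ t in Set.Ioc (0:ℝ) T, om T t * (r t + ⟪y t, θ t⟫ - ‖y t‖ ^ 2 / 2)) ≤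
      ∫ t in Set.Ioc (0:ℝ) T, om T t * (r t + ⟪θ t, θ t⟫ - ‖θ t‖ ^ 2 / 2) := by
  refine setIntegral_mono_on (integrableOn_portfolio hr hy hθ hy2 hθ2)
    (integrableOn_portfolio hr hθ hθ hθ2 hθ2) measurableSet_Ioc fun t ht => ?_
  refine mul_le_mul_of_nonneg_left ?_ (by linarith [one_le_om ht.2])
  rw [real_inner_self_eq_norm_sq]
  nlinarith [sq_nonneg (‖y t‖ - ‖θ t‖), real_inner_le_norm (y t) (θ t)]

lemma integrableOn_Vtot {T : ℝ} {v : ℝ → ℝ} (hv : IntegrableOn v (Set.Ioc 0 T)) :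
    IntegrableOn (Vtot v) (Set.Ioc 0 T) :=
  integrableOn_of_continuousOn_Icc
    (intervalIntegral.continuousOn_primitive ((integrableOn_Icc_iff_integrableOn_Ioc (by simp)).2 hv))

/-- Fubini for the running integral: `∫₀ᵀ V_t dt = ∫₀ᵀ (T - s) v_s ds`. -/
lemma integral_Vtot {T : ℝ} {v : ℝ → ℝ} (hv : IntegrableOn v (Set.Ioc 0 T)) :
    (∫ t in Set.Ioc (0:ℝ) T, Vtot v t) = ∫ s in Set.Ioc (0:ℝ) T, (T - s) * v s := by
  set μ := (volume : Measure ℝ).restrict (Set.Ioc 0 T) with hμ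
  have hS : MeasurableSet {p : ℝ × ℝ | p.2 ≤ p.1} := measurableSet_le measurable_snd measurable_fst
  have hint : Integrable (Function.uncurry fun t s : ℝ => (Set.Iic t).indicator v s)
      (μ.prod μ) := by
    have h := (Integrable.comp_snd (μ := μ) (ν := μ) hv).indicator hS
    refine h.congr (ae_of_all _ fun p => ?_)
    simp [Set.indicator, Function.uncurry]
  have hswap := integral_integral_swap hint
  calc (∫ t, Vtot v t ∂μ) = ∫ t, ∫ s, (Set.Iic t).indicator v s ∂μ ∂μ := by
        refine setIntegral_congr_fun measurableSet_Ioc fun t ht => ?_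
        simp only [Vtot]
        rw [hμ, setIntegral_indicator measurableSet_Iic, Set.Ioc_inter_Iic, min_eq_right ht.2]
    _ = ∫ s, ∫ t, (Set.Iic t).indicator v s ∂μ ∂μ := hswap
    _ = ∫ s, (T - s) * v s ∂μ := by
        refine setIntegral_congr_fun measurableSet_Ioc fun s hs => ?_
        have : (fun t => (Set.Iic t).indicator v s) = (Set.Ici s).indicator fun _ => v s := by
          ext t
          simp [Set.indicator]
        simp only [this]
        have hset : Set.Ioc 0 T ∩ Set.Ici s = Set.Icc s T := by
          ext t
          constructor
          · rintro ⟨h1, h2⟩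
            exact ⟨h2, h1.2⟩
          · rintro ⟨h1, h2⟩
            exact ⟨⟨hs.1.trans_le h1, h2⟩, h1⟩
        rw [hμ, setIntegral_indicator measurableSet_Ici, hset, setIntegral_const]
        simp [Measure.real, hs.2]

lemma integrableOn_log_of_admiss {d : ℕ} {T : ℝ} {y : ℝ → E d} {v : ℝ → ℝ}
    (h : Admiss T y v) : IntegrableOn (fun t => Real.log (v t)) (Set.Ioc 0 T) := by
  obtain ⟨-, -, hvm, hpos, hvi, hneg⟩ := h
  refine Integrable.mono' (hvi.add hneg) hvm.log.aestronglyMeasurable ?_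
  filter_upwards [ae_restrict_mem measurableSet_Ioc] with t ht
  have hp := hpos t (Set.Ioc_subset_Icc_self ht)
  have h1 := Real.log_le_sub_one_of_pos hp
  have h2 := le_max_left (-Real.log (v t)) 0
  have h3 := le_max_right (-Real.log (v t)) 0
  simp only [Pi.add_apply]
  rw [Real.norm_eq_abs, abs_le]
  constructor <;> linarith

lemma consumption_eq {d : ℕ} {T : ℝ} {y : ℝ → E d} {v : ℝ → ℝ} (h : Admiss T y v) :
    (∫ t in Set.Ioc (0:ℝ) T, (Real.log (v t) - Vtot v t)) - Vtot v T =
      ∫ t in Set.Ioc (0:ℝ) T, (Real.log (v t) - om T t * v t) := by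
  have hlog := integrableOn_log_of_admiss h
  obtain ⟨-, -, -, -, hvi, -⟩ := h
  rw [integral_sub hlog (integrableOn_Vtot hvi), integral_sub hlog (IntegrableOn.om_mul hvi),
    integral_Vtot hvi]
  have h2 : (∫ t in Set.Ioc (0:ℝ) T, om T t * v t) =
      (∫ t in Set.Ioc (0:ℝ) T, (T - t) * v t) + Vtot v T := by
    have h3 : IntegrableOn (fun t => (T - t) * v t) (Set.Ioc 0 T) := by
      refine ((IntegrableOn.om_mul hvi).sub hvi).congr (ae_of_all _ fun t => ?_)
      simp only [Pi.sub_apply, om]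
      ring
    unfold Vtot
    rw [← integral_add h3 hvi]
    congr 1
    ext t
    simp only [om]
    ring
  rw [h2]
  ring

lemma consumption_le {d : ℕ} {T : ℝ} {y θ : ℝ → E d} {v : ℝ → ℝ} (h : Admiss T y v)
    (hs : Admiss T θ (fun t => 1 / om T t)) :
    (∫ t in Set.Ioc (0:ℝ) T, (Real.log (v t) - Vtot v t)) - Vtot v T ≤
      (∫ t in Set.Ioc (0:ℝ) T, (Real.log (1 / om T t) - Vtot (fun t => 1 / om T t) t))
        - Vtot (fun t => 1 / om T t) T := by
  rw [consumption_eq h, consumption_eq hs]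
  refine setIntegral_mono_on
    ((integrableOn_log_of_admiss h).sub (IntegrableOn.om_mul h.2.2.2.2.1))
    ((integrableOn_log_of_admiss hs).sub (IntegrableOn.om_mul hs.2.2.2.2.1))
    measurableSet_Ioc fun t ht => ?_
  have hv := h.2.2.2.1 t (Set.Ioc_subset_Icc_self ht)
  have ho : 0 < om T t := by linarith [one_le_om ht.2]
  have h1 := Real.log_le_sub_one_of_pos (mul_pos ho hv)
  rw [Real.log_mul ho.ne' hv.ne'] at h1
  rw [one_div, Real.log_inv, mul_inv_cancel₀ ho.ne']
  linarith

/-- Theorem 4.10 of the paper. -/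
theorem stmt12 {d : ℕ} (hd : 1 ≤ d) {T : ℝ} (hT : 0 < T)
    (θ : ℝ → E d) (hθm : Measurable θ)
    (hθ2 : IntegrableOn (fun t => ‖θ t‖ ^ 2) (Set.Ioc 0 T))
    {a qa : ℝ} (ha0 : 0 < a) (ha2 : a < 1 / 2) (hqneg : qa < 0)
    (hquant : (∫ s in Set.Iic qa, Real.exp (-s ^ 2 / 2)) = a * Real.sqrt (2 * π))
    (r : ℝ → ℝ) (hr : IntegrableOn r (Set.Ioc 0 T)) {x : ℝ} (hx : 0 < x)
    (hqθ : max 1 (nrm θ T) < |qa|)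
    {z : ℝ} (hz0 : 0 < z) (hz1 : z < 1)
    (hz2 : 1 - (1 / (T + 1)) * Fal qa (|qa| + nrm θ T) * Real.exp (nrm θ T ^ 2) < z) :
    Admiss T θ (fun t => 1 / om T t) ∧
    ESOK T θ θ (fun t => 1 / om T t) qa z ∧
    ∀ (y : ℝ → E d) (v : ℝ → ℝ), Admiss T y v → ESOK T θ y v qa z →
      Jcost T x r θ y v ≤ Jcost T x r θ θ (fun t => 1 / om T t) := by
  have hs := admiss_one_div_om hθm hθ2
  refine ⟨hs, ESOK_self hT hθ2 ((le_max_right _ _).trans hqθ.le) hz1 hz2, fun y v h _ => ?_⟩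
  have h1 := portfolio_le hr h.1 hθm h.2.1 hθ2
  have h2 := consumption_le h hs
  unfold Jcost
  linarith
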